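/- Let G be a group with generating set X such that the Cayley graph Γ(G,X) is hyperbolic, and let H_1, H_2 be subgroups each hyperbolically embedded in (G,X). Then for each R ≥ 0 there exists C ≥ 0 such that the set of elements s ∈ G satisfying both d_X(1,s) ≤ R and the existence of a, b ∈ H_1 ∩ N_R(sH_2) with d_X(a,b) ≥ C is finite. -/

import Mathlib

open Pointwise

section BasicDefs

variable {G : Type*} [Group G]

/-- The word length of `g` with respect to the generating set `S`
(words use letters from `S ∪ S⁻¹`). -/
noncomputable def wordLength (S : Set G) (g : G) : ℕ :=
  sInf {n : ℕ | ∃ l : List G, l.length = n ∧ (∀ x ∈ l, x ∈ S ∨ x⁻¹ ∈ S) ∧ l.prod = g}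

/-- The word metric on `G` with respect to the generating set `S`. -/
noncomputable def wordDist (S : Set G) (g h : G) : ℝ :=
  (wordLength S (g⁻¹ * h) : ℝ)

/-- The closed `r`-neighborhood of a subset `A` with respect to the word metric `d_S`. -/
def nbhd (S : Set G) (r : ℝ) (A : Set G) : Set G :=
  {g : G | ∃ a ∈ A, wordDist S g a ≤ r}

/-- The distance between two subsets: the infimum of distances between their elements. -/
noncomputable def setDist (S : Set G) (A B : Set G) : ℝ :=
  sInf {r : ℝ | ∃ a ∈ A, ∃ b ∈ B, r = wordDist S a b}

/-- The conjugate subgroup `H^g = g H g⁻¹`. -/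
def conjSub (g : G) (H : Subgroup G) : Subgroup G :=
  H.map (MulAut.conj g).toMonoidHom

end BasicDefs

/-- `γ` restricted to `{0, …, n}` is a `(K, ε)`-quasigeodesic for the distance function `d`. -/
def IsQuasigeodesic {α : Type*} (d : α → α → ℝ) (K ε : ℝ) (n : ℕ) (γ : ℕ → α) : Prop :=
  ∀ i j : ℕ, i ≤ n → j ≤ n →
    (1 / K) * |(i : ℝ) - (j : ℝ)| - ε ≤ d (γ i) (γ j) ∧
      d (γ i) (γ j) ≤ K * |(i : ℝ) - (j : ℝ)| + ε

/-- `γ` restricted to `{0, …, n}` is a geodesic for the distance function `d`. -/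
def IsGeodesic {α : Type*} (d : α → α → ℝ) (n : ℕ) (γ : ℕ → α) : Prop :=
  ∀ i j : ℕ, i ≤ n → j ≤ n → d (γ i) (γ j) = |(i : ℝ) - (j : ℝ)|

/-- The path `γ` (on `{0, …, n}`) is `f`-stable: every `(K, ε)`-quasigeodesic with endpoints
on `γ` stays in the `f K ε`-neighborhood of `γ`. -/
def IsStablePath {α : Type*} (d : α → α → ℝ) (f : ℝ → ℝ → ℝ) (n : ℕ) (γ : ℕ → α) : Prop :=
  ∀ K ε : ℝ, 1 ≤ K → 0 ≤ ε → ∀ (m : ℕ) (η : ℕ → α),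
    IsQuasigeodesic d K ε m η →
    (∃ i ≤ n, η 0 = γ i) → (∃ i ≤ n, η m = γ i) →
    ∀ j ≤ m, ∃ i ≤ n, d (η j) (γ i) ≤ f K ε

/-- The Gromov product `⟨x, y⟩_w` with respect to a distance function `d`. -/
noncomputable def gromovProd {α : Type*} (d : α → α → ℝ) (w x y : α) : ℝ :=
  (d w x + d w y - d x y) / 2

/-- Gromov hyperbolicity of a distance function, via the four-point condition. -/
def IsHyperbolicDist {α : Type*} (d : α → α → ℝ) : Prop :=
  ∃ δ : ℝ, 0 ≤ δ ∧ ∀ w x y z : α,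
    min (gromovProd d w x y) (gromovProd d w y z) - δ ≤ gromovProd d w x z

section GroupDefs

variable {G : Type*} [Group G]

/-- `H` is a stable subgroup of `(G, d_S)` with stability function `f`: `H` has a finite
generating set `T` such that the inclusion `(H, d_T) → (G, d_S)` is a quasi-isometric
embedding sending every `d_T`-geodesic to an `f`-stable quasigeodesic of `(G, d_S)`. -/
def IsStableSubgroupWith (S : Set G) (H : Subgroup G) (f : ℝ → ℝ → ℝ) : Prop :=
  ∃ T : Set H, T.Finite ∧ Subgroup.closure T = ⊤ ∧
    (∃ μ c : ℝ, 1 ≤ μ ∧ 0 ≤ c ∧ ∀ h₁ h₂ : H,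
      (1 / μ) * wordDist T h₁ h₂ - c ≤ wordDist S (h₁ : G) (h₂ : G) ∧
        wordDist S (h₁ : G) (h₂ : G) ≤ μ * wordDist T h₁ h₂ + c) ∧
    ∀ (n : ℕ) (γ : ℕ → H), IsGeodesic (wordDist T) n γ →
      (∃ K ε : ℝ, 1 ≤ K ∧ 0 ≤ ε ∧
        IsQuasigeodesic (wordDist S) K ε n (fun i => (γ i : G))) ∧
      IsStablePath (wordDist S) f n (fun i => (γ i : G))

/-- `H` is a stable subgroup of `(G, d_S)`. -/
def IsStableSubgroup (S : Set G) (H : Subgroup G) : Prop :=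
  ∃ f : ℝ → ℝ → ℝ, IsStableSubgroupWith S H f

/-- The family `Q` of subgroups is hyperbolically embedded in `(G, X)`:
(Q1) geometric separation, (Q2) finite generation, (Q3) uniform quasi-isometric embedding. -/
def IsHypEmbFamily {G : Type*} [Group G] {ι : Type*} (X : Set G) (Q : ι → Subgroup G) : Prop :=
  (∀ ε : ℝ, 0 < ε → ∃ R : ℝ, ∀ (g : G) (i j : ι),
      (∃ a ∈ (Q i : Set G) ∩ nbhd X ε (g • (Q j : Set G)),
        ∃ b ∈ (Q i : Set G) ∩ nbhd X ε (g • (Q j : Set G)), R ≤ wordDist X a b) →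
      i = j ∧ g ∈ Q i) ∧
  ∃ Y : ι → Set G, (∀ i, (Y i).Finite ∧ Y i ⊆ (Q i : Set G) ∧ Subgroup.closure (Y i) = Q i) ∧
    ∃ μ c : ℝ, 1 ≤ μ ∧ 0 ≤ c ∧ ∀ i : ι, ∀ h ∈ Q i,
      (wordLength (Y i) h : ℝ) ≤ μ * (wordLength X h : ℝ) + c

/-- The subset `H` of `G` satisfies the WPD condition in `(G, X)`. -/
def WPDSet (X : Set G) (H : Set G) : Prop :=
  ∀ ε : ℝ, 0 < ε → ∃ N : ℝ, 0 < N ∧ ∀ h₁ h₂ : G, h₁ ∈ H → h₂ ∈ H →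
    N < wordDist X h₁ h₂ →
    {g : G | wordDist X h₁ (g * h₁) < ε ∧ wordDist X h₂ (g * h₂) < ε}.Finite

/-- A quasimorphism on `G`. -/
def IsQuasimorphism (q : G → ℝ) : Prop :=
  ∃ D : ℝ, 0 ≤ D ∧ ∀ x y : G, |q (x * y) - q x - q y| ≤ D

/-- A homogeneous quasimorphism on `G`. -/
def IsHomogeneousQM (q : G → ℝ) : Prop :=
  IsQuasimorphism q ∧ ∀ (x : G) (n : ℕ), q (x ^ n) = (n : ℝ) * q x

/-- `H` is a quasiconvex subgroup of `(G, d_S)`: every geodesic with endpoints in `H`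
lies in a uniformly bounded neighborhood of `H`. -/
def IsQuasiconvex (S : Set G) (H : Subgroup G) : Prop :=
  ∃ C : ℝ, 0 ≤ C ∧ ∀ (n : ℕ) (γ : ℕ → G), IsGeodesic (wordDist S) n γ →
    γ 0 ∈ H → γ n ∈ H → ∀ i ≤ n, ∃ h ∈ H, wordDist S (γ i) h ≤ C

end GroupDefs

/-!
The geodesic from `1` to a far away point `a ∈ H₁ ∩ N_R(sH₂)` stays in a neighbourhood of `H₁` and
in one of `sH₂`, because undistorted subgroups of a hyperbolic group are quasiconvex, with constants
that do not see `s`. Its point at distance `L` from `1` is therefore close to some `u ∈ H₁` and to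
some `sh` with `h ∈ H₂`, and only finitely many pairs `(u, h)` occur since balls of `H₁` and `H₂`
are finite. For a fixed pair, two such elements `s`, `t` differ by `t⁻¹s`, which moves `1` and `h`
by a bounded amount; when `L` is large, the WPD property of `H₂` leaves finitely many `t⁻¹s`.

Quasiconvexity: at the point `w` of the geodesic farthest from the subgroup, at distance `D`, follow
the geodesic for about `2D` in both directions and drop to the subgroup. This gives two points
joined by a chain in the subgroup with `O(D)` steps. The chain avoids the `D`-ball about `w`, while
hyperbolicity requires exponentially many steps for that.
-/

/-- The four-point condition of `IsHyperbolicDist` with a given constant `δ`. -/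
def IsDeltaHyperbolic {α : Type*} (δ : ℝ) (d : α → α → ℝ) : Prop :=
  ∀ w x y z : α, min (gromovProd d w x y) (gromovProd d w y z) - δ ≤ gromovProd d w x z

lemma IsDeltaHyperbolic.sub_le_gromovProd {α : Type*} {d : α → α → ℝ} {δ B : ℝ} {w x y z : α}
    (hδ : IsDeltaHyperbolic δ d) (hxy : B ≤ gromovProd d w x y) (hyz : B ≤ gromovProd d w y z) :
    B - δ ≤ gromovProd d w x z :=
  (sub_le_sub_right (le_min hxy hyz) δ).trans (hδ w x y z)

section HyperbolicMetric

variable {α : Type*} [PseudoMetricSpace α] {w x y : α} {δ B M R : ℝ} {n : ℕ} {γ : ℕ → α}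

lemma gromovProd_comm : gromovProd dist w x y = gromovProd dist w y x := by
  simp only [gromovProd, dist_comm x y, add_comm]

lemma le_gromovProd_of_dist_le (hx : B ≤ dist w x) (hy : B ≤ dist w y) (hxy : dist x y ≤ M) :
    B - M / 2 ≤ gromovProd dist w x y := by
  unfold gromovProd
  linarith

lemma sub_dist_le_gromovProd (hy : B ≤ dist w y) : B - dist x y ≤ gromovProd dist w x y := by
  unfold gromovProd
  linarith [dist_triangle_left w y x, dist_triangle w x y]

lemma IsDeltaHyperbolic.le_gromovProd_of_chain {p : ℕ → α}
    (hδ : IsDeltaHyperbolic δ (dist : α → α → ℝ)) (hM : 0 ≤ M) {k : ℕ} (hn : n ≤ 2 ^ k)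
    (hB : ∀ i ≤ n, B ≤ dist w (p i)) (hp : ∀ i < n, dist (p i) (p (i + 1)) ≤ M) :
    B - M / 2 - k * δ ≤ gromovProd dist w (p 0) (p n) := by
  induction k generalizing n p with
  | zero =>
    have hstep : dist (p 0) (p n) ≤ M := by
      obtain rfl | rfl : n = 0 ∨ n = 1 := Nat.le_one_iff_eq_zero_or_eq_one.1 hn
      · rwa [dist_self]
      · exact hp 0 one_pos
    simpa using le_gromovProd_of_dist_le (hB 0 n.zero_le) (hB n le_rfl) hstep
  | succ k ih =>
    rw [pow_succ] at hn
    set m := min n (2 ^ k)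
    have hmn : m ≤ n := min_le_left _ _
    have hleft := ih (min_le_right n (2 ^ k)) (fun i hi => hB i (hi.trans hmn))
      (fun i hi => hp i (hi.trans_le hmn))
    have hright := ih (n := n - m) (p := fun i => p (m + i)) (by omega)
      (fun i hi => hB (m + i) (by omega)) (fun i hi => hp (m + i) (by omega))
    simp only [add_zero, Nat.add_sub_cancel' hmn] at hright
    have := hδ.sub_le_gromovProd hleft hright
    push_cast
    linarith

lemma IsDeltaHyperbolic.le_gromovProd_of_detour {p : ℕ → α} {r : ℝ}
    (hδ : IsDeltaHyperbolic δ (dist : α → α → ℝ)) (hδ₀ : 0 ≤ δ) (hM : 0 ≤ M) (hr : 0 ≤ r) {k : ℕ}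
    (hn : n ≤ 2 ^ k) (hB : ∀ i ≤ n, B ≤ dist w (p i)) (hp : ∀ i < n, dist (p i) (p (i + 1)) ≤ M)
    (hx : B - r ≤ gromovProd dist w x (p 0)) (hy : B - r ≤ gromovProd dist w y (p n)) :
    B - r - M / 2 - (k + 2) * δ ≤ gromovProd dist w x y := by
  have hchain := hδ.le_gromovProd_of_chain hM hn hB hp
  have hkδ : 0 ≤ k * δ := by positivity
  rw [gromovProd_comm] at hy
  have hright : B - r - M / 2 - k * δ - δ ≤ gromovProd dist w (p 0) y :=
    hδ.sub_le_gromovProd (y := p n) (by linarith) (by linarith)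
  have hboth : B - r - M / 2 - k * δ - δ - δ ≤ gromovProd dist w x y :=
    hδ.sub_le_gromovProd (y := p 0) (by linarith) hright
  linarith

lemma IsGeodesic.dist_eq_sub (hγ : IsGeodesic dist n γ) {i j : ℕ} (hij : i ≤ j) (hj : j ≤ n) :
    dist (γ i) (γ j) = j - i := by
  rw [hγ i j (hij.trans hj) hj, abs_sub_comm, abs_of_nonneg (by simpa using hij)]

lemma IsGeodesic.gromovProd_eq_zero (hγ : IsGeodesic dist n γ) {i j k : ℕ} (hij : i ≤ j)
    (hjk : j ≤ k) (hk : k ≤ n) : gromovProd dist (γ j) (γ i) (γ k) = 0 := by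
  rw [gromovProd, dist_comm (γ j) (γ i), hγ.dist_eq_sub hij (hjk.trans hk), hγ.dist_eq_sub hjk hk,
    hγ.dist_eq_sub (hij.trans hjk) hk]
  ring

lemma isGeodesic_of_dist_succ_le (hstep : ∀ i < n, dist (γ i) (γ (i + 1)) ≤ 1)
    (hn : n ≤ dist (γ 0) (γ n)) : IsGeodesic dist n γ := by
  have hlip {i j : ℕ} (hij : i ≤ j) (hj : j ≤ n) : dist (γ i) (γ j) ≤ j - i := by
    simpa [Nat.cast_sub hij] using
      dist_le_Ico_sum_of_dist_le (f := γ) (d := fun _ => 1) hij fun _ hk =>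
        hstep _ (hk.trans_le hj)
  intro i j hi hj
  wlog hij : i ≤ j generalizing i j
  · rw [dist_comm, abs_sub_comm]
    exact this j i hj hi (le_of_not_ge hij)
  rw [abs_sub_comm, abs_of_nonneg (by simpa using hij)]
  refine (hlip hij hj).antisymm ?_
  have hleft := hlip i.zero_le hi
  rw [Nat.cast_zero, sub_zero] at hleft
  linarith [hlip hj le_rfl, dist_triangle4 (γ 0) (γ i) (γ j) (γ n)]

/-- Any two points `a`, `b` of `A` are joined by a chain in `A` whose steps have length at most `M`
and whose number of steps is at most `μ * dist a b + c`. This is the only property of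
quasi-isometrically embedded subgroups that enters the proof of their quasiconvexity. -/
def IsLinearlyChained (M μ c : ℝ) (A : Set α) : Prop :=
  ∀ a ∈ A, ∀ b ∈ A, ∃ (n : ℕ) (p : ℕ → α), p 0 = a ∧ p n = b ∧ (∀ i ≤ n, p i ∈ A) ∧
    (∀ i < n, dist (p i) (p (i + 1)) ≤ M) ∧ n ≤ μ * dist a b + c

lemma exists_mem_gromovProd_ge {A : Set α} (hA : A.Nonempty) (hR : 0 ≤ R) {v : α}
    (hvw : Metric.infDist v A ≤ Metric.infDist w A)
    (hv : 2 * Metric.infDist w A ≤ dist w v ∨ Metric.infDist v A ≤ R) :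
    ∃ a ∈ A, dist v a ≤ Metric.infDist w A + 1 ∧
      Metric.infDist w A - R - 1 ≤ gromovProd dist w v a := by
  obtain ⟨a, ha, hva⟩ := (Metric.infDist_lt_iff hA).1 (lt_add_one (Metric.infDist v A))
  refine ⟨a, ha, by linarith, ?_⟩
  have hwa := Metric.infDist_le_dist_of_mem (x := w) ha
  rcases hv with hfar | hnear
  · unfold gromovProd
    linarith
  · linarith [sub_dist_le_gromovProd (x := v) hwa]

lemma IsGeodesic.exists_detour {A : Set α} (hne : A.Nonempty) (hγ : IsGeodesic dist n γ)
    (h₀ : Metric.infDist (γ 0) A ≤ R) (hn : Metric.infDist (γ n) A ≤ R) {i : ℕ} (hi : i ≤ n)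
    (hmax : ∀ j ≤ n, Metric.infDist (γ j) A ≤ Metric.infDist (γ i) A) :
    ∃ x y, gromovProd dist (γ i) x y = 0 ∧ ∃ a ∈ A, ∃ b ∈ A,
      dist a b ≤ 6 * Metric.infDist (γ i) A + 4 ∧
      Metric.infDist (γ i) A - R - 1 ≤ gromovProd dist (γ i) x a ∧
      Metric.infDist (γ i) A - R - 1 ≤ gromovProd dist (γ i) y b := by
  have hR : 0 ≤ R := Metric.infDist_nonneg.trans h₀
  set D := Metric.infDist (γ i) A
  have hD : 0 ≤ D := Metric.infDist_nonneg
  set m := ⌈2 * D⌉₊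
  have hm : 2 * D ≤ m := Nat.le_ceil _
  have hm' : m < 2 * D + 1 := Nat.ceil_lt_add_one (by positivity)
  -- Truncation in `i - m`, like the `min`, stops the walk at the endpoints of the geodesic.
  obtain ⟨a, ha, hda, hga⟩ := exists_mem_gromovProd_ge (v := γ (i - m)) hne hR
    (hmax _ (by omega)) <| by
      rcases le_total m i with hmi | him
      · left
        rw [dist_comm, hγ.dist_eq_sub (i.sub_le m) hi, Nat.cast_sub hmi]
        linarith
      · right
        rwa [Nat.sub_eq_zero_of_le him]
  obtain ⟨b, hb, hdb, hgb⟩ := exists_mem_gromovProd_ge (v := γ (min n (i + m))) hne hR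
    (hmax _ (min_le_left _ _)) <| by
      rcases le_total (i + m) n with hmn | hnm
      · left
        rw [min_eq_right hmn, hγ.dist_eq_sub (i.le_add_right m) hmn]
        push_cast
        linarith
      · right
        rwa [min_eq_left hnm]
  refine ⟨_, _, hγ.gromovProd_eq_zero (i.sub_le m) (le_min hi (i.le_add_right m))
    (min_le_left _ _), a, ha, b, hb, ?_, hga, hgb⟩
  have hlen : (min n (i + m) : ℕ) ≤ ((i - m : ℕ) : ℝ) + 2 * m := by norm_cast; omega
  have hmid := hγ.dist_eq_sub (i := i - m) (j := min n (i + m)) (by omega) (min_le_left _ _)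
  have htri := dist_triangle4 a (γ (i - m)) (γ (min n (i + m))) b
  rw [dist_comm a (γ (i - m))] at htri
  linarith

lemma IsDeltaHyperbolic.infDist_le_of_isMax {A : Set α} {μ c : ℝ}
    (hδ : IsDeltaHyperbolic δ (dist : α → α → ℝ)) (hδ₀ : 0 ≤ δ) (hM : 0 ≤ M) (hμ : 0 ≤ μ)
    (hne : A.Nonempty) (hA : IsLinearlyChained M μ c A) (hγ : IsGeodesic dist n γ)
    (h₀ : Metric.infDist (γ 0) A ≤ R) (hn : Metric.infDist (γ n) A ≤ R) {i : ℕ} (hi : i ≤ n)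
    (hmax : ∀ j ≤ n, Metric.infDist (γ j) A ≤ Metric.infDist (γ i) A) {k : ℕ}
    (hk : μ * (6 * Metric.infDist (γ i) A + 4) + c ≤ 2 ^ k) :
    Metric.infDist (γ i) A ≤ R + 1 + M / 2 + 2 * δ + k * δ := by
  obtain ⟨x, y, hxy, a, ha, b, hb, hab, hxa, hyb⟩ := hγ.exists_detour hne h₀ hn hi hmax
  obtain ⟨l, p, rfl, rfl, hpA, hpM, hl⟩ := hA a ha b hb
  have hlk : l ≤ 2 ^ k := by
    have : μ * dist (p 0) (p l) ≤ μ * (6 * Metric.infDist (γ i) A + 4) := by gcongr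
    exact_mod_cast hl.trans ((add_le_add_left this c).trans hk)
  have hR : 0 ≤ R := Metric.infDist_nonneg.trans h₀
  have hdetour := hδ.le_gromovProd_of_detour hδ₀ hM (add_nonneg hR zero_le_one) hlk
    (fun j hj => Metric.infDist_le_dist_of_mem (hpA j hj)) hpM
    ((sub_sub _ _ _).ge.trans hxa) ((sub_sub _ _ _).ge.trans hyb)
  linarith

lemma exists_bound_of_forall_le_two_pow (A c : ℝ) {K : ℝ} (hK : 0 ≤ K) (hδ : 0 ≤ δ) :
    ∃ D₀ : ℝ, ∀ D : ℝ, (∀ k : ℕ, K * D + c ≤ 2 ^ k → D ≤ A + k * δ) → D ≤ D₀ := by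
  obtain ⟨k₀, hk₀⟩ : ∃ k₀ : ℕ, ∀ k ≥ k₀, K * (A + (k + 1 : ℕ) * δ) + c ≤ 2 ^ k := by
    have hconst : (fun _ : ℕ => K * (A + δ) + c) =o[Filter.atTop] fun k => (2 : ℝ) ^ k :=
      Asymptotics.isLittleO_const_left.2 <| .inr <|
        Filter.tendsto_abs_atTop_atTop.comp (tendsto_pow_atTop_atTop_of_one_lt one_lt_two)
    have hlin := (isLittleO_coe_const_pow_of_one_lt (R := ℝ) one_lt_two).const_mul_left (K * δ)
    obtain ⟨k₀, hk₀⟩ := Filter.eventually_atTop.1 ((hlin.add hconst).bound one_pos)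
    refine ⟨k₀, fun k hk => ?_⟩
    have := (le_abs_self _).trans (hk₀ k hk)
    rw [one_mul, Real.norm_of_nonneg (by positivity)] at this
    push_cast
    linarith
  refine ⟨A + k₀ * δ, fun D hD => ?_⟩
  have hex : ∃ k : ℕ, K * D + c ≤ 2 ^ k :=
    (pow_unbounded_of_one_lt _ one_lt_two).imp fun _ => le_of_lt
  classical
  by_contra! hlt
  have hk := hD _ (Nat.find_spec hex)
  have hk₀_lt : k₀ < Nat.find hex := by
    by_contra! hle
    have : (Nat.find hex : ℝ) * δ ≤ k₀ * δ := by gcongr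
    linarith
  obtain ⟨k, hk_eq⟩ := Nat.exists_eq_add_one_of_ne_zero (Nat.ne_zero_of_lt hk₀_lt)
  rw [hk_eq] at hk hk₀_lt
  refine Nat.find_min hex (m := k) (by omega) ((hk₀ k (by omega)).trans' ?_)
  gcongr

theorem IsHyperbolicDist.exists_infDist_geodesic_le (hα : IsHyperbolicDist (dist : α → α → ℝ))
    {μ : ℝ} (hM : 0 ≤ M) (hμ : 0 ≤ μ) (c R : ℝ) :
    ∃ D : ℝ, ∀ A : Set α, A.Nonempty → IsLinearlyChained M μ c A →
      ∀ (n : ℕ) (γ : ℕ → α), IsGeodesic dist n γ →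
        Metric.infDist (γ 0) A ≤ R → Metric.infDist (γ n) A ≤ R →
        ∀ i ≤ n, Metric.infDist (γ i) A ≤ D := by
  obtain ⟨δ, hδ₀, hδ : IsDeltaHyperbolic δ dist⟩ := hα
  obtain ⟨D, hD⟩ := exists_bound_of_forall_le_two_pow (R + 1 + M / 2 + 2 * δ) (μ * 4 + c)
    (show 0 ≤ μ * 6 by positivity) hδ₀
  refine ⟨D, fun A hne hA n γ hγ h₀ hn i hi => ?_⟩
  obtain ⟨j, hj, hmax⟩ := (Finset.range (n + 1)).exists_max_image
    (fun j => Metric.infDist (γ j) A) ⟨0, by simp⟩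
  simp only [Finset.mem_range, Nat.lt_succ_iff] at hj hmax
  refine (hmax i hi).trans (hD _ fun k hk => ?_)
  exact hδ.infDist_le_of_isMax hδ₀ hM hμ hne hA hγ h₀ hn hj hmax (by linarith)

end HyperbolicMetric

section WordMetric

variable {G : Type*} [Group G] {S : Set G}

lemma wordLength_prod_le {l : List G} (hl : ∀ x ∈ l, x ∈ S ∨ x⁻¹ ∈ S) :
    wordLength S l.prod ≤ l.length :=
  Nat.sInf_le ⟨l, rfl, hl, rfl⟩

lemma exists_word_of_mem_closure {g : G} (hg : g ∈ Subgroup.closure S) :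
    ∃ l : List G, l.length = wordLength S g ∧ (∀ x ∈ l, x ∈ S ∨ x⁻¹ ∈ S) ∧ l.prod = g := by
  rw [← Subgroup.mem_toSubmonoid, Subgroup.closure_toSubmonoid] at hg
  obtain ⟨l, hl, hprod⟩ := Submonoid.exists_list_of_mem_closure hg
  exact Nat.sInf_mem (s := {n | ∃ l : List G, l.length = n ∧ (∀ x ∈ l, x ∈ S ∨ x⁻¹ ∈ S) ∧
    l.prod = g}) ⟨l.length, l, rfl, hl, hprod⟩

lemma wordLength_one : wordLength S (1 : G) = 0 :=
  Nat.le_zero.1 (wordLength_prod_le (S := S) (l := []) (by simp))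

lemma wordLength_mul_le (hS : Subgroup.closure S = ⊤) (g h : G) :
    wordLength S (g * h) ≤ wordLength S g + wordLength S h := by
  obtain ⟨l, hl_len, hl, rfl⟩ := exists_word_of_mem_closure (S := S) (g := g) (by simp [hS])
  obtain ⟨m, hm_len, hm, rfl⟩ := exists_word_of_mem_closure (S := S) (g := h) (by simp [hS])
  rw [← hl_len, ← hm_len, ← List.prod_append, ← List.length_append]
  exact wordLength_prod_le fun x hx => (List.mem_append.1 hx).elim (hl x) (hm x)

lemma wordLength_inv_le (hS : Subgroup.closure S = ⊤) (g : G) :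
    wordLength S g⁻¹ ≤ wordLength S g := by
  obtain ⟨l, hl_len, hl, rfl⟩ := exists_word_of_mem_closure (S := S) (g := g) (by simp [hS])
  rw [List.prod_inv_reverse, ← hl_len]
  refine (wordLength_prod_le fun x hx => ?_).trans_eq (by simp)
  obtain ⟨y, hy, rfl⟩ : ∃ y ∈ l, y⁻¹ = x := by simpa using hx
  simpa using (hl y hy).symm

lemma wordLength_inv (hS : Subgroup.closure S = ⊤) (g : G) : wordLength S g⁻¹ = wordLength S g :=
  (wordLength_inv_le hS g).antisymm (by simpa using wordLength_inv_le hS g⁻¹)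

lemma wordDist_one_left (g : G) : wordDist S 1 g = wordLength S g := by
  simp [wordDist]

lemma wordDist_self (g : G) : wordDist S g g = 0 := by
  simp [wordDist, wordLength_one]

lemma wordDist_comm (hS : Subgroup.closure S = ⊤) (g h : G) :
    wordDist S g h = wordDist S h g := by
  rw [wordDist, ← wordLength_inv hS, mul_inv_rev, inv_inv, wordDist]

lemma wordDist_triangle (hS : Subgroup.closure S = ⊤) (g k h : G) :
    wordDist S g h ≤ wordDist S g k + wordDist S k h := by
  unfold wordDist
  rw [← mul_inv_cancel_left k h, ← mul_assoc, mul_inv_cancel_left]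
  exact_mod_cast wordLength_mul_le hS (g⁻¹ * k) (k⁻¹ * h)

lemma wordDist_mul_left (s g h : G) : wordDist S (s * g) (s * h) = wordDist S g h := by
  simp [wordDist, mul_assoc]

/-- The word metric of a generating set as a metric on the group. It is not an instance, because it
depends on the generating set. -/
noncomputable abbrev wordPseudoMetric (hS : Subgroup.closure S = ⊤) : PseudoMetricSpace G where
  dist := wordDist S
  dist_self := wordDist_self
  dist_comm := wordDist_comm hS
  dist_triangle := wordDist_triangle hS

lemma abs_wordDist_sub_le (hS : Subgroup.closure S = ⊤) (g h g' h' : G) :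
    |wordDist S g h - wordDist S g' h'| ≤ wordDist S g g' + wordDist S h h' :=
  let := wordPseudoMetric hS
  dist_dist_dist_le g h g' h'

/-- The path in the Cayley graph that starts at `g` and reads the letters of `l`; it stays at its
endpoint after time `l.length`. -/
def wordPath (g : G) (l : List G) (i : ℕ) : G :=
  g * (l.take i).prod

@[simp] lemma wordPath_zero (g : G) (l : List G) : wordPath g l 0 = g := by
  simp [wordPath]

@[simp] lemma wordPath_length (g : G) (l : List G) : wordPath g l l.length = g * l.prod := by
  simp [wordPath]

lemma wordDist_wordPath_succ (g : G) {l : List G} {i : ℕ} (hi : i < l.length) :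
    wordDist S (wordPath g l i) (wordPath g l (i + 1)) = wordLength S l[i] := by
  rw [wordPath, wordPath, List.prod_take_succ l i hi, wordDist_mul_left, ← wordDist_one_left]
  nth_rw 1 [← mul_one (l.take i).prod]
  rw [wordDist_mul_left]

lemma exists_isGeodesic (hS : Subgroup.closure S = ⊤) (x y : G) :
    ∃ (n : ℕ) (γ : ℕ → G), IsGeodesic (wordDist S) n γ ∧ γ 0 = x ∧ γ n = y := by
  let := wordPseudoMetric hS
  obtain ⟨l, hl_len, hl, hprod⟩ :=
    exists_word_of_mem_closure (S := S) (g := x⁻¹ * y) (by simp [hS])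
  have hend : wordPath x l l.length = y := by simp [hprod]
  refine ⟨l.length, wordPath x l, isGeodesic_of_dist_succ_le (fun i hi => ?_) ?_,
    wordPath_zero x l, hend⟩
  · refine (wordDist_wordPath_succ x hi).trans_le ?_
    have := wordLength_prod_le (S := S) (l := [l[i]]) (by simpa using hl _ (l.getElem_mem hi))
    exact_mod_cast (by simpa using this : wordLength S l[i] ≤ 1)
  · rw [hend, wordPath_zero, hl_len]
    exact le_rfl

lemma finite_setOf_wordLength_le (hS : S.Finite) (n : ℕ) :
    {g ∈ Subgroup.closure S | wordLength S g ≤ n}.Finite := by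
  have : Finite ↥(S ∪ S⁻¹) := (hS.union hS.inv).to_subtype
  refine ((List.finite_length_le ↥(S ∪ S⁻¹) n).image fun l => (l.map Subtype.val).prod).subset ?_
  rintro g ⟨hg, hgn⟩
  obtain ⟨l, hl_len, hl, rfl⟩ := exists_word_of_mem_closure hg
  lift l to List ↥(S ∪ S⁻¹) using hl
  exact ⟨l, by simpa using hl_len.trans_le hgn, rfl⟩

end WordMetric

section Subgroups

variable {G : Type*} [Group G] {X : Set G} {H : Subgroup G}

/-- `H` is finitely generated and its inclusion in `(G, d_X)` is a quasi-isometric embedding. Only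
the bound of `d_Y` by `d_X` is imposed; the other one holds because `Y` is finite. -/
def IsUndistorted (X : Set G) (H : Subgroup G) : Prop :=
  ∃ Y : Set G, Y.Finite ∧ Subgroup.closure Y = H ∧
    ∃ μ c : ℝ, 0 ≤ μ ∧ ∀ h ∈ H, (wordLength Y h : ℝ) ≤ μ * wordLength X h + c

lemma IsHypEmbFamily.isUndistorted {ι : Type*} {Q : ι → Subgroup G} (hQ : IsHypEmbFamily X Q)
    (i : ι) : IsUndistorted X (Q i) := by
  obtain ⟨-, Y, hY, μ, c, hμ, -, hYX⟩ := hQ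
  exact ⟨Y i, (hY i).1, (hY i).2.2, μ, c, by linarith, hYX i⟩

lemma IsUndistorted.finite_ball (hH : IsUndistorted X H) (r : ℝ) :
    {h ∈ H | wordDist X 1 h ≤ r}.Finite := by
  obtain ⟨Y, hYfin, rfl, μ, c, hμ, hYX⟩ := hH
  refine (finite_setOf_wordLength_le hYfin ⌈μ * r + c⌉₊).subset fun h ⟨hh, hr⟩ => ⟨hh, ?_⟩
  rw [wordDist_one_left] at hr
  have : (wordLength Y h : ℝ) ≤ μ * r + c := (hYX h hh).trans (by gcongr)
  exact_mod_cast this.trans (Nat.le_ceil _)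

lemma isLinearlyChained_coset (hX : Subgroup.closure X = ⊤) {Y : Set G} {M μ c : ℝ}
    (hYX : ∀ h ∈ Subgroup.closure Y, (wordLength Y h : ℝ) ≤ μ * wordLength X h + c)
    (hM : ∀ y ∈ Y, wordLength X y ≤ M) (g : G) :
    letI := wordPseudoMetric hX
    IsLinearlyChained M μ c (g • (Subgroup.closure Y : Set G)) := by
  rintro _ ⟨h, hh, rfl⟩ _ ⟨k, hk, rfl⟩
  have hhk : h⁻¹ * k ∈ Subgroup.closure Y := mul_mem (inv_mem hh) hk
  obtain ⟨l, hl_len, hl, hprod⟩ := exists_word_of_mem_closure hhk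
  have hlH : ∀ x ∈ l, x ∈ Subgroup.closure Y := fun x hx =>
    (hl x hx).elim (Subgroup.subset_closure ·)
      fun hx' => inv_mem_iff.1 (Subgroup.subset_closure hx')
  refine ⟨l.length, wordPath (g * h) l, wordPath_zero _ l, ?_, fun i _ => ?_, fun i hi => ?_, ?_⟩
  · simp [hprod, mul_assoc]
  · refine ⟨h * (l.take i).prod, mul_mem hh ?_, (mul_assoc _ _ _).symm⟩
    exact list_prod_mem fun x hx => hlH x (List.mem_of_mem_take hx)
  · refine (wordDist_wordPath_succ (g * h) hi).trans_le ?_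
    rcases hl _ (l.getElem_mem hi) with hy | hy
    · exact hM _ hy
    · rw [← wordLength_inv hX]
      exact hM _ hy
  · rw [hl_len]
    refine (hYX _ hhk).trans_eq ?_
    simp [dist, wordDist, mul_assoc]

theorem IsUndistorted.exists_geodesic_subset_nbhd (hX : Subgroup.closure X = ⊤)
    (hhyp : IsHyperbolicDist (wordDist X)) (hH : IsUndistorted X H) (R : ℝ) :
    ∃ D : ℝ, ∀ (g : G) (n : ℕ) (γ : ℕ → G), IsGeodesic (wordDist X) n γ →
      γ 0 ∈ nbhd X R (g • (H : Set G)) → γ n ∈ nbhd X R (g • (H : Set G)) →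
      ∀ i ≤ n, γ i ∈ nbhd X D (g • (H : Set G)) := by
  let := wordPseudoMetric hX
  obtain ⟨Y, hYfin, rfl, μ, c, hμ, hYX⟩ := hH
  obtain ⟨M, hM⟩ := (hYfin.image (wordLength X)).bddAbove
  obtain ⟨D, hD⟩ := hhyp.exists_infDist_geodesic_le M.cast_nonneg hμ c R
  refine ⟨D + 1, fun g n γ hγ h₀ hn i hi => ?_⟩
  have infDist_le {v : G} (hv : v ∈ nbhd X R (g • (Subgroup.closure Y : Set G))) :
      Metric.infDist v (g • (Subgroup.closure Y : Set G)) ≤ R :=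
    hv.elim fun _ ha => (Metric.infDist_le_dist_of_mem ha.1).trans ha.2
  have hne : (g • (Subgroup.closure Y : Set G)).Nonempty := ⟨_, 1, one_mem _, rfl⟩
  have hi_le := hD _ hne (isLinearlyChained_coset hX hYX
    (fun y hy => Nat.cast_le.2 (hM ⟨y, hy, rfl⟩)) g) n γ hγ (infDist_le h₀) (infDist_le hn) i hi
  obtain ⟨a, ha, hlt⟩ := (Metric.infDist_lt_iff hne).1 (hi_le.trans_lt (lt_add_one D))
  exact ⟨a, ha, hlt.le⟩

theorem IsHypEmbFamily.wpdSet {ι : Type*} {Q : ι → Subgroup G} (hQ : IsHypEmbFamily X Q) (i : ι) :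
    WPDSet X (Q i) := by
  intro ε hε
  obtain ⟨R, hsep⟩ := hQ.1 ε hε
  refine ⟨max R 1, by positivity, fun h₁ h₂ hh₁ hh₂ hN => ?_⟩
  refine (((hQ.isUndistorted i).finite_ball ε).image (MulAut.conj h₁)).subset
    fun g ⟨hg₁, hg₂⟩ => ⟨h₁⁻¹ * g * h₁, ⟨?_, ?_⟩, by simp [mul_assoc]⟩
  · have hgQ : g ∈ Q i := (hsep g i i
      ⟨h₁, ⟨hh₁, g * h₁, ⟨h₁, hh₁, rfl⟩, hg₁.le⟩, h₂, ⟨hh₂, g * h₂, ⟨h₂, hh₂, rfl⟩, hg₂.le⟩,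
        (le_max_left R 1).trans hN.le⟩).2
    exact mul_mem (mul_mem (inv_mem hh₁) hgQ) hh₁
  · rw [← wordDist_mul_left h₁]
    simpa [mul_assoc] using hg₁.le

lemma WPDSet.exists_finite_setOf_wordDist_le (hX : Subgroup.closure X = ⊤) (hH : WPDSet X H)
    (r : ℝ) : ∃ N : ℝ, ∀ h ∈ H, N < wordDist X 1 h →
      ∀ u : G, {s | wordDist X 1 s ≤ r ∧ wordDist X u (s * h) ≤ r}.Finite := by
  obtain ⟨N, -, hN⟩ := hH (2 * |r| + 1) (by positivity)
  refine ⟨N, fun h hh hlong u => ?_⟩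
  rcases Set.eq_empty_or_nonempty {s | wordDist X 1 s ≤ r ∧ wordDist X u (s * h) ≤ r}
    with hempty | ⟨t, ht₁, htu⟩
  · exact hempty ▸ Set.finite_empty
  refine ((hN 1 h H.one_mem hh hlong).image (t * ·)).subset fun s ⟨hs₁, hsu⟩ =>
    ⟨t⁻¹ * s, ⟨?_, ?_⟩, mul_inv_cancel_left t s⟩
  · rw [← wordDist_mul_left t, mul_one, mul_one, mul_inv_cancel_left]
    have := wordDist_triangle hX t 1 s
    rw [wordDist_comm hX t 1] at this
    linarith [le_abs_self r]
  · rw [← wordDist_mul_left t, mul_assoc, mul_inv_cancel_left]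
    have := wordDist_triangle hX (t * h) u (s * h)
    rw [wordDist_comm hX (t * h) u] at this
    linarith [le_abs_self r]

end Subgroups

lemma exists_close_pair_of_mem_nbhd {G : Type*} [Group G] {X : Set G} {H₁ H₂ : Subgroup G}
    (hX : Subgroup.closure X = ⊤) (hhyp : IsHyperbolicDist (wordDist X))
    (h₁ : IsUndistorted X H₁) (h₂ : IsUndistorted X H₂) (R : ℝ) :
    ∃ D : ℝ, ∀ (s a : G) (L : ℕ), wordDist X 1 s ≤ R →
      a ∈ (H₁ : Set G) ∩ nbhd X R (s • (H₂ : Set G)) → L ≤ wordDist X 1 a →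
      ∃ u ∈ H₁, ∃ h ∈ H₂, wordDist X u (s * h) ≤ D ∧
        |wordDist X 1 u - L| ≤ D ∧ |wordDist X 1 h - L| ≤ D := by
  obtain ⟨D₁, hD₁⟩ := h₁.exists_geodesic_subset_nbhd hX hhyp R
  obtain ⟨D₂, hD₂⟩ := h₂.exists_geodesic_subset_nbhd hX hhyp R
  refine ⟨D₁ + D₂ + R, fun s a L hs ⟨haH, haN⟩ hL => ?_⟩
  have hR : 0 ≤ R := (Nat.cast_nonneg _).trans hs
  obtain ⟨n, γ, hγ, hγ₀, rfl⟩ := exists_isGeodesic hX 1 a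
  have hγ_dist {i : ℕ} (hi : i ≤ n) : wordDist X 1 (γ i) = i := by
    rw [← hγ₀, hγ 0 i n.zero_le hi]
    simp
  have hLn : L ≤ n := by exact_mod_cast hL.trans_eq (hγ_dist le_rfl)
  have mem_nbhd {v : G} (hv : v ∈ H₁) : v ∈ nbhd X R ((1 : G) • (H₁ : Set G)) :=
    ⟨v, by simpa using hv, by rwa [wordDist_self]⟩
  obtain ⟨u, hu, hwu⟩ := hD₁ 1 n γ hγ (mem_nbhd (hγ₀ ▸ one_mem H₁)) (mem_nbhd haH) L hLn
  obtain ⟨_, ⟨h, hh, rfl⟩, hwh⟩ := hD₂ s n γ hγ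
    ⟨s, ⟨1, one_mem H₂, mul_one s⟩, hγ₀ ▸ hs⟩ haN L hLn
  change wordDist X (γ L) (s * h) ≤ D₂ at hwh
  have hD₁_nonneg : 0 ≤ D₁ := (Nat.cast_nonneg _).trans hwu
  have hD₂_nonneg : 0 ≤ D₂ := (Nat.cast_nonneg _).trans hwh
  rw [one_smul] at hu
  rw [wordDist_comm hX] at hwu
  have huL := abs_wordDist_sub_le hX 1 u 1 (γ L)
  have hhL := abs_wordDist_sub_le hX s (s * h) 1 (γ L)
  rw [hγ_dist hLn, wordDist_self] at huL
  nth_rw 1 [← mul_one s] at hhL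
  rw [hγ_dist hLn, wordDist_mul_left, wordDist_comm hX s 1, wordDist_comm hX (s * h)] at hhL
  refine ⟨u, hu, h, hh, ?_, by linarith, by linarith⟩
  linarith [wordDist_triangle hX u (γ L) (s * h)]

theorem finiteness_double_cosets_general {G : Type*} [Group G] (X : Set G)
    (hXgen : Subgroup.closure X = ⊤) (hhyp : IsHyperbolicDist (wordDist X)) (H₁ H₂ : Subgroup G)
    (h₁ : IsUndistorted X H₁) (h₂ : IsUndistorted X H₂) (hwpd : WPDSet X H₂) :
    ∀ R : ℝ, ∃ C : ℝ, 0 ≤ C ∧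
      {s : G | wordDist X 1 s ≤ R ∧
        ∃ a ∈ (H₁ : Set G) ∩ nbhd X R (s • (H₂ : Set G)),
        ∃ b ∈ (H₁ : Set G) ∩ nbhd X R (s • (H₂ : Set G)),
          C ≤ wordDist X a b}.Finite := by
  intro R
  obtain ⟨D, hD⟩ := exists_close_pair_of_mem_nbhd hXgen hhyp h₁ h₂ R
  obtain ⟨N, hN⟩ := hwpd.exists_finite_setOf_wordDist_le hXgen (max R D)
  obtain ⟨L, hL⟩ := exists_nat_gt (N + D)
  refine ⟨2 * L, by positivity, ?_⟩
  refine ((h₁.finite_ball (L + D)).biUnion fun u _ =>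
    ((h₂.finite_ball (L + D)).inter_of_left {h | N < wordDist X 1 h}).biUnion fun h hh =>
      hN h hh.1.1 hh.2 u).subset ?_
  rintro s ⟨hs, a, ha, b, hb, hab⟩
  obtain ⟨v, hv, hvL⟩ :
      ∃ v ∈ (H₁ : Set G) ∩ nbhd X R (s • (H₂ : Set G)), L ≤ wordDist X 1 v := by
    by_contra! hlt
    have := wordDist_triangle hXgen a 1 b
    rw [wordDist_comm hXgen a 1] at this
    linarith [hlt a ha, hlt b hb]
  obtain ⟨u, hu, h, hh, huh, huL, hhL⟩ := hD s v L hs hv hvL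
  rw [abs_le] at huL hhL
  simp only [Set.mem_iUnion]
  exact ⟨u, ⟨hu, by linarith⟩, h, ⟨⟨hh, by linarith⟩, show N < _ by linarith⟩,
    hs.trans (le_max_left R D), huh.trans (le_max_right R D)⟩

/-- **Finiteness of double cosets with large coarse intersection.** -/
theorem finiteness_double_cosets {G : Type*} [Group G] (X : Set G)
    (hXgen : Subgroup.closure X = ⊤) (hhyp : IsHyperbolicDist (wordDist X))
    (H₁ H₂ : Subgroup G)
    (he₁ : IsHypEmbFamily X (fun _ : Fin 1 => H₁))
    (he₂ : IsHypEmbFamily X (fun _ : Fin 1 => H₂)) :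
    ∀ R : ℝ, 0 ≤ R → ∃ C : ℝ, 0 ≤ C ∧
      {s : G | wordDist X 1 s ≤ R ∧
        ∃ a ∈ (H₁ : Set G) ∩ nbhd X R (s • (H₂ : Set G)),
        ∃ b ∈ (H₁ : Set G) ∩ nbhd X R (s • (H₂ : Set G)),
          C ≤ wordDist X a b}.Finite :=
  fun R _ => finiteness_double_cosets_general X hXgen hhyp H₁ H₂ (he₁.isUndistorted 0)
    (he₂.isUndistorted 0) (he₂.wpdSet 0) R
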